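/- arXiv:1702.04957 — 2 statements merged into one kernel-verified Lean document; each statement's English description precedes it below -/
import Mathlib

section
/- Let ρ be a probability density on ℝ^d, P ∈ Π(ρ) with P(D_α) = 0 for some α > 0. Define ρ_ε = ρ * η_ε, γ_ε(x,y) = ρ(x)η_ε(y−x)/ρ_ε(y) (set to 0 when ρ_ε(y) = 0), P̃_ε(Y) = ∫ H_ε(Y−X) dP(X), and P_ε(X) = ∫ P̃_ε(Y) ∏_{i=1}^N γ_ε(x_i,y_i) dY. If 0 < ε < α/8 and X = (x₁,…,x_N) satisfies |x_i − x_j| < α/4 for some i ≠ j, then P_ε(X) = 0. -/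
/-!
The mollifier `η_ε` is supported in the ball of radius `ε`, so each smoothing step moves every
particle by less than `ε`, and the distance between two particles changes by less than `2ε`
(`dist_lt_of_etaScaled_ne_zero`). If the integrand defining `P_ε(X)` were nonzero at `Y`, then
`|y_i - y_j| < α/4 + 2ε < α/2` because of the factors `γ_ε`, and `H_ε(Y - X') ≠ 0` would force
`|x'_i - x'_j| < α/2 + 2ε < α`. As `P`-almost every `X'` lies outside `D_α`, the integral
`P̃_ε(Y)` vanishes, a contradiction. So the integrand is identically zero.
-/

open MeasureTheory Filter Topology

noncomputable section

/-- `ℝ^d` as a Euclidean space. -/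
abbrev Ed (d : ℕ) := EuclideanSpace ℝ (Fin d)

/-- Configuration space of `N` points in `ℝ^d`. -/
abbrev Conf (d N : ℕ) := Fin N → Ed d

/-- The open strip `D_α` of width `α` around the diagonal. -/
def Dstrip (d N : ℕ) (α : ℝ) : Set (Conf d N) :=
  {X | ∃ i j : Fin N, i ≠ j ∧ dist (X i) (X j) < α}

/-- Transport plans: probability measures on `(ℝ^d)^N` whose marginals all equal `μ`. -/
def Plans {d : ℕ} (N : ℕ) (μ : Measure (Ed d)) : Set (Measure (Conf d N)) :=
  {P | IsProbabilityMeasure P ∧ ∀ i : Fin N, P.map (fun X => X i) = μ}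

/-- The standard mollifier `η(u) = k·exp(-1/(1-|u|²))` for `|u| < 1`, `0` otherwise. -/
def eta (d : ℕ) (k : ℝ) (u : Ed d) : ℝ :=
  if ‖u‖ < 1 then k * Real.exp (-1 / (1 - ‖u‖ ^ 2)) else 0

/-- The rescaled mollifier `η_ε(u) = ε^{-d} η(u/ε)`. -/
def etaScaled (d : ℕ) (k ε : ℝ) (u : Ed d) : ℝ := (ε ^ d)⁻¹ * eta d k (ε⁻¹ • u)

/-- The product mollifier `H_ε(Z) = ∏_i η_ε(z_i)` on `(ℝ^d)^N`. -/
def Hmol (d N : ℕ) (k ε : ℝ) (Z : Conf d N) : ℝ := ∏ i : Fin N, etaScaled d k ε (Z i)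

/-- The mollification `P̃_ε(Y) = ∫ H_ε(Y-X) dP(X)` of a measure `P` on `(ℝ^d)^N`. -/
def mollifiedPlan (d N : ℕ) (k ε : ℝ) (P : Measure (Conf d N)) (Y : Conf d N) : ℝ :=
  ∫ X, Hmol d N k ε (Y - X) ∂P

/-- The mollified density `ρ_ε = ρ * η_ε`. -/
def rhoMol (d : ℕ) (k ε : ℝ) (ρ : Ed d → ℝ) (y : Ed d) : ℝ :=
  ∫ x, ρ x * etaScaled d k ε (y - x)

/-- `γ_ε(x,y) = ρ(x)η_ε(y-x)/ρ_ε(y)`, set to `0` when `ρ_ε(y) = 0`. -/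
def gammaMol (d : ℕ) (k ε : ℝ) (ρ : Ed d → ℝ) (x y : Ed d) : ℝ :=
  if rhoMol d k ε ρ y = 0 then 0
  else ρ x * etaScaled d k ε (y - x) / rhoMol d k ε ρ y

/-- The plan `P_ε(X) = ∫ P̃_ε(Y) ∏_i γ_ε(x_i,y_i) dY`, which has marginals `ρ` again. -/
def reconstructedPlan (d N : ℕ) (k ε : ℝ) (ρ : Ed d → ℝ) (P : Measure (Conf d N))
    (X : Conf d N) : ℝ :=
  ∫ Y : Conf d N, mollifiedPlan d N k ε P Y * ∏ i : Fin N, gammaMol d k ε ρ (X i) (Y i)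

/-- `η_ε` is supported in the open ball of radius `ε`. -/
lemma dist_lt_of_etaScaled_ne_zero {d : ℕ} {k ε : ℝ} (hε : 0 < ε) {x y : Ed d}
    (h : etaScaled d k ε (y - x) ≠ 0) : dist y x < ε := by
  by_contra hc
  apply h
  have hn : ¬ ‖ε⁻¹ • (y - x)‖ < 1 := by
    rw [norm_smul, norm_inv, Real.norm_of_nonneg hε.le, ← dist_eq_norm,
      inv_mul_lt_iff₀ hε, mul_one]
    exact hc
  simp [etaScaled, eta, hn]

lemma dist_lt_of_gammaMol_ne_zero {d : ℕ} {k ε : ℝ} (hε : 0 < ε) {ρ : Ed d → ℝ} {x y : Ed d}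
    (h : gammaMol d k ε ρ x y ≠ 0) : dist y x < ε := by
  apply dist_lt_of_etaScaled_ne_zero (k := k) hε
  intro h0
  simp [gammaMol, h0] at h

/-- Mollification brings particles closer by at most `2ε`: if `P` gives no mass to `D_α`, then
`P̃_ε` vanishes wherever two particles are at distance at most `α - 2ε`. -/
lemma mollifiedPlan_eq_zero {d N : ℕ} {k ε α : ℝ} (hε : 0 < ε) {P : Measure (Conf d N)}
    (hdiag : P (Dstrip d N α) = 0) {Y : Conf d N} {i j : Fin N} (hij : i ≠ j)
    (hY : dist (Y i) (Y j) ≤ α - 2 * ε) : mollifiedPlan d N k ε P Y = 0 := by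
  apply integral_eq_zero_of_ae
  filter_upwards [measure_eq_zero_iff_ae_notMem.mp hdiag] with Z hZ
  by_contra hne
  have hfac := Finset.prod_ne_zero_iff.mp hne
  have hi : dist (Y i) (Z i) < ε := dist_lt_of_etaScaled_ne_zero hε (hfac i (Finset.mem_univ i))
  have hj : dist (Y j) (Z j) < ε := dist_lt_of_etaScaled_ne_zero hε (hfac j (Finset.mem_univ j))
  refine hZ ⟨i, j, hij, ?_⟩
  have := dist_triangle4 (Z i) (Y i) (Y j) (Z j)
  rw [dist_comm (Z i) (Y i)] at this
  linarith

/-- **The reconstructed plan vanishes near the diagonal.** If `P(D_α) = 0`, `0 < ε < α/8`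
and `|x_i - x_j| < α/4` for some `i ≠ j`, then `P_ε(X) = 0`. -/
theorem reconstructedPlan_eq_zero_near_diagonal (d N : ℕ) (k : ℝ) (hk : 0 < k)
    (hnorm : ∫ u : Ed d, eta d k u = 1)
    (ρ : Ed d → ℝ) (hmeas : Measurable ρ) (h0 : ∀ x, 0 ≤ ρ x)
    (hprob : IsProbabilityMeasure (volume.withDensity fun x => ENNReal.ofReal (ρ x)))
    (P : Measure (Conf d N))
    (hP : P ∈ Plans N (volume.withDensity fun x => ENNReal.ofReal (ρ x)))
    (α : ℝ) (hα : 0 < α) (hdiag : P (Dstrip d N α) = 0)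
    (ε : ℝ) (hε0 : 0 < ε) (hε : ε < α / 8)
    (X : Conf d N) (hX : ∃ i j : Fin N, i ≠ j ∧ dist (X i) (X j) < α / 4) :
    reconstructedPlan d N k ε ρ P X = 0 := by
  obtain ⟨i, j, hij, hXij⟩ := hX
  apply integral_eq_zero_of_ae
  refine Eventually.of_forall fun Y => ?_
  by_contra hne
  obtain ⟨hm, hprod⟩ := mul_ne_zero_iff.mp hne
  have hfac := Finset.prod_ne_zero_iff.mp hprod
  have hi := dist_lt_of_gammaMol_ne_zero hε0 (hfac i (Finset.mem_univ i))
  have hj := dist_lt_of_gammaMol_ne_zero hε0 (hfac j (Finset.mem_univ j))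
  apply hm
  apply mollifiedPlan_eq_zero hε0 hdiag hij
  have := dist_triangle4 (Y i) (X i) (X j) (Y j)
  rw [dist_comm (X j) (Y j)] at this
  linarith
end
end

section
/- Let ρ be a probability density on ℝ^d and P ∈ Π(ρ). Define ρ_ε = ρ * η_ε, γ_ε(x,y) = ρ(x)η_ε(y−x)/ρ_ε(y) (set to 0 when ρ_ε(y) = 0), P̃_ε(Y) = ∫ H_ε(Y−X) dP(X), and P_ε(X) = ∫ P̃_ε(Y) ∏_{i=1}^N γ_ε(x_i,y_i) dY. Then each P_ε(X) dX is a probability measure belonging to Π(ρ) (all its N marginals equal ρ), and P_ε converges narrowly to P as ε → 0. -/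
/-!
Write `μ = ρ dx`. Since `γ_ε(x', y) = ρ(x') η_ε(y - x') / ρ_ε(y)`, Tonelli's theorem gives
`P_ε = (X' ↦ ∫ ∏ i, q (X i) (X' i) dP(X)) · μ^{⊗N}`, where
`q x x' = ∫ η_ε(y - x) η_ε(y - x') / ρ_ε(y) dy` (`withDensity_reconstructedPlan`).

The kernel `q` is symmetric, and `∫ q x x' dμ(x') = 1` for `μ`-almost every `x`: integrating out `x'`
first leaves `∫ η_ε(y - x) 1_{ρ_ε(y) ≠ 0} dy`, and the part of `η_ε(· - x)` lost on `{ρ_ε = 0}`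
has `μ`-integral `∫_{ρ_ε = 0} ρ_ε = 0` (`ae_lintegral_overlap`). Thus `q x x' dμ(x')` is a Markov
kernel, reversible with respect to `μ`; applying it independently to the `N` coordinates of a plan
preserves the marginals (`gluedPlan_mem_plans`).

The kernel moves each point by less than `2ε`, since both `x` and `x'` lie within `ε` of some `y`.
Hence `P B ≤ P_ε (thickening B)` with radius `2ε`, so the Lévy-Prokhorov distance between `P_ε` and
`P` is at most `2ε` (`levyProkhorovDist_gluedPlan_le`). Convergence in that distance implies narrow
convergence.

The computations are carried out with `ℝ≥0∞`-valued integrals. The real-valued definitions agree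
with them wherever the integrals are finite, which for `P_ε` is only almost everywhere.
-/

open MeasureTheory Filter Topology

noncomputable section

/-! ### Product measures -/

/-- Tonelli's theorem for a product of functions of the separate coordinates. -/
lemma lintegral_pi_prod {n : ℕ} {E : Type*} [MeasurableSpace E] (μ : Measure E) [SigmaFinite μ]
    (f : Fin n → E → ENNReal) (hf : ∀ i, Measurable (f i)) :
    ∫⁻ x : Fin n → E, ∏ i, f i (x i) ∂(Measure.pi fun _ => μ) = ∏ i, ∫⁻ x, f i x ∂μ := by
  induction n with
  | zero => simp
  | succ n ih =>
    calc
      _ = ∫⁻ x : E × (Fin n → E), f 0 x.1 * ∏ i : Fin n, f i.succ (x.2 i)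
            ∂(μ.prod (Measure.pi fun _ => μ)) := by
          rw [← ((measurePreserving_piFinSuccAbove (fun _ => μ) 0).symm).lintegral_comp_emb
            (MeasurableEquiv.measurableEmbedding _)]
          simp_rw [MeasurableEquiv.piFinSuccAbove_symm_apply, Fin.insertNthEquiv,
            Fin.prod_univ_succ, Fin.insertNth_zero, Equiv.coe_fn_mk, Fin.cons_succ, Fin.cons_zero]
          rfl
      _ = (∫⁻ x, f 0 x ∂μ) * ∏ i : Fin n, ∫⁻ x, f i.succ x ∂μ := by
          rw [← ih (fun i => f i.succ) fun i => hf i.succ]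
          exact lintegral_prod_mul (hf 0).aemeasurable (Finset.measurable_prod _
            fun i _ => (hf (Fin.succ i)).comp (measurable_pi_apply i)).aemeasurable
      _ = _ := by rw [Fin.prod_univ_succ]

lemma pi_withDensity (d N : ℕ) (g : Ed d → ENNReal) (hg : Measurable g)
    [SigmaFinite ((volume : Measure (Ed d)).withDensity g)] :
    (volume : Measure (Conf d N)).withDensity (fun X => ∏ i, g (X i))
      = Measure.pi fun _ => volume.withDensity g := by
  symm
  refine Measure.pi_eq fun s hs => ?_
  rw [withDensity_apply _ (MeasurableSet.univ_pi hs),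
    ← lintegral_indicator (MeasurableSet.univ_pi hs)]
  have key : ∀ X : Conf d N, (Set.univ.pi s).indicator (fun X => ∏ i, g (X i)) X
      = ∏ i, (s i).indicator g (X i) := by
    intro X
    by_cases hX : X ∈ Set.univ.pi s
    · rw [Set.indicator_of_mem hX]
      exact Finset.prod_congr rfl fun i _ => (Set.indicator_of_mem (hX i trivial) g).symm
    · rw [Set.indicator_of_notMem hX]
      obtain ⟨i, hi⟩ : ∃ i, X i ∉ s i := by simpa [Set.mem_pi] using hX
      exact (Finset.prod_eq_zero (Finset.mem_univ i) (Set.indicator_of_notMem hi g)).symm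
  simp_rw [key]
  rw [volume_pi, lintegral_pi_prod _ _ fun i => hg.indicator (hs i)]
  exact Finset.prod_congr rfl fun i _ => by
    rw [lintegral_indicator (hs i), withDensity_apply _ (hs i)]

/-! ### Applying a reversible kernel to each coordinate of a plan -/

section Glue

variable {d N : ℕ} {μ : Measure (Ed d)} {P : Measure (Conf d N)} {q : Ed d → Ed d → ENNReal}

/-- The density, with respect to `μ^{⊗N}`, of the plan obtained from `P` by moving the coordinates
independently with the kernel `q x x' dμ(x')`. -/
def gluedDensity (P : Measure (Conf d N)) (q : Ed d → Ed d → ENNReal) (Z : Conf d N) : ENNReal :=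
  ∫⁻ X, ∏ i, q (X i) (Z i) ∂P

/-- The plan obtained from `P` by moving the coordinates independently with the kernel
`q x x' dμ(x')`. It is meant for symmetric `q` with `∫ q x x' dμ(x') = 1` for `μ`-a.e. `x`. -/
def gluedPlan (μ : Measure (Ed d)) (P : Measure (Conf d N)) (q : Ed d → Ed d → ENNReal) :
    Measure (Conf d N) :=
  (Measure.pi fun _ => μ).withDensity (gluedDensity P q)

lemma measurable_prod_q (hq : Measurable (Function.uncurry q)) :
    Measurable fun Z : Conf d N × Conf d N => ∏ i, q (Z.1 i) (Z.2 i) :=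
  Finset.measurable_prod _ fun i _ => hq.comp
    (f := fun Z : Conf d N × Conf d N => (Z.1 i, Z.2 i))
    (((measurable_pi_apply i).comp measurable_fst).prodMk
      ((measurable_pi_apply i).comp measurable_snd))

lemma measurable_gluedDensity [SFinite P] (hq : Measurable (Function.uncurry q)) :
    Measurable (gluedDensity P q) :=
  (measurable_prod_q hq).lintegral_prod_left'

lemma lintegral_gluedPlan [IsProbabilityMeasure μ] [IsProbabilityMeasure P]
    (hq : Measurable (Function.uncurry q)) {F : Conf d N → ENNReal} (hF : Measurable F) :
    ∫⁻ X', F X' ∂gluedPlan μ P q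
      = ∫⁻ X, ∫⁻ X', F X' * ∏ i, q (X i) (X' i) ∂(Measure.pi fun _ => μ) ∂P := by
  have hm := measurable_prod_q (N := N) hq
  rw [gluedPlan, lintegral_withDensity_eq_lintegral_mul _ (measurable_gluedDensity hq) hF,
    lintegral_lintegral_swap]
  · refine lintegral_congr fun X' => ?_
    have hm' : Measurable fun X : Conf d N => ∏ i, q (X i) (X' i) :=
      hm.comp measurable_prodMk_right
    rw [lintegral_const_mul _ hm', Pi.mul_apply, mul_comm, gluedDensity]
  · exact ((hF.comp measurable_snd).mul hm).aemeasurable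

/-- A `μ`-a.e. property holds for all coordinates of `P`-a.e. configuration, because the marginals
of `P` are `μ`. -/
lemma ae_marginal_one (hP : P ∈ Plans N μ) (hq1 : ∀ᵐ x ∂μ, ∫⁻ x', q x x' ∂μ = 1) :
    ∀ᵐ X ∂P, ∀ i, ∫⁻ x', q (X i) x' ∂μ = 1 := by
  refine ae_all_iff.2 fun i => ?_
  rw [← hP.2 i] at hq1
  have := ae_of_ae_map (measurable_pi_apply i).aemeasurable hq1
  rwa [hP.2 i] at this

lemma lintegral_prod_q [IsProbabilityMeasure μ] (hq : Measurable (Function.uncurry q))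
    {X : Conf d N} (hX : ∀ i, ∫⁻ x', q (X i) x' ∂μ = 1) :
    ∫⁻ X' : Conf d N, ∏ i, q (X i) (X' i) ∂(Measure.pi fun _ => μ) = 1 := by
  rw [lintegral_pi_prod _ (fun i => q (X i)) fun i => hq.comp measurable_prodMk_left]
  simp [hX]

/-- The coordinates other than `i` integrate out to `1`, and reversibility of the kernel with
respect to `μ` then shows that the `i`-th marginal is still `μ`. -/
lemma gluedPlan_map [IsProbabilityMeasure μ] (hP : P ∈ Plans N μ)
    (hq : Measurable (Function.uncurry q)) (hsymm : ∀ x x', q x x' = q x' x)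
    (hq1 : ∀ᵐ x ∂μ, ∫⁻ x', q x x' ∂μ = 1) (i : Fin N) :
    (gluedPlan μ P q).map (fun X => X i) = μ := by
  have := hP.1
  ext B hB
  have hev : Measurable fun X : Conf d N => X i := measurable_pi_apply i
  have hind : Measurable (B.indicator (1 : Ed d → ENNReal)) := measurable_one.indicator hB
  have hqx : ∀ x, Measurable (q x) := fun x => hq.comp measurable_prodMk_left
  calc (gluedPlan μ P q).map (fun X => X i) B
      = ∫⁻ X', B.indicator 1 (X' i) ∂gluedPlan μ P q := by
        rw [← lintegral_map hind hev, lintegral_indicator_one hB]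
    _ = ∫⁻ X, ∫⁻ X', B.indicator 1 (X' i) * ∏ j, q (X j) (X' j) ∂(Measure.pi fun _ => μ) ∂P :=
        lintegral_gluedPlan hq (hind.comp hev)
    _ = ∫⁻ X, ∫⁻ x', B.indicator 1 x' * q (X i) x' ∂μ ∂P := by
        refine lintegral_congr_ae ?_
        filter_upwards [ae_marginal_one hP hq1] with X hX
        -- The indicator is absorbed into the `i`-th factor, so that Tonelli's theorem applies.
        have e : ∀ X' : Conf d N, B.indicator 1 (X' i) * ∏ j, q (X j) (X' j)
            = ∏ j, ((if j = i then B.indicator 1 (X' j) else 1) * q (X j) (X' j)) := by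
          intro X'
          rw [Finset.prod_mul_distrib, Finset.prod_ite_eq' Finset.univ i]
          simp
        simp_rw [e]
        rw [lintegral_pi_prod μ (fun j x => (if j = i then B.indicator 1 x else 1) * q (X j) x),
          Finset.prod_eq_single i]
        · simp
        · intro j _ hj
          simpa [hj] using hX j
        · simp
        · intro j
          by_cases hj : j = i
          · simpa [hj, Pi.mul_def] using hind.mul (hqx (X i))
          · simpa [hj] using hqx (X j)
    _ = ∫⁻ x, ∫⁻ x', B.indicator 1 x' * q x x' ∂μ ∂μ := by
        conv_rhs => rw [← hP.2 i]
        rw [lintegral_map _ hev, hP.2 i]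
        exact ((hind.comp measurable_snd).mul hq).lintegral_prod_right'
    _ = ∫⁻ x', B.indicator 1 x' * ∫⁻ x, q x' x ∂μ ∂μ := by
        rw [lintegral_lintegral_swap ((hind.comp measurable_snd).mul hq).aemeasurable]
        refine lintegral_congr fun x' => ?_
        simp_rw [hsymm _ x']
        rw [lintegral_const_mul _ (hqx x')]
    _ = ∫⁻ x', B.indicator 1 x' ∂μ := by
        refine lintegral_congr_ae ?_
        filter_upwards [hq1] with x' hx'
        rw [hx', mul_one]
    _ = μ B := lintegral_indicator_one hB

lemma gluedPlan_mem_plans [IsProbabilityMeasure μ] (hP : P ∈ Plans N μ)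
    (hq : Measurable (Function.uncurry q)) (hsymm : ∀ x x', q x x' = q x' x)
    (hq1 : ∀ᵐ x ∂μ, ∫⁻ x', q x x' ∂μ = 1) : gluedPlan μ P q ∈ Plans N μ := by
  have := hP.1
  refine ⟨⟨?_⟩, gluedPlan_map hP hq hsymm hq1⟩
  rw [← lintegral_one, lintegral_gluedPlan hq measurable_const]
  rw [lintegral_congr_ae (g := fun _ => 1)]
  · simp
  · filter_upwards [ae_marginal_one hP hq1] with X hX
    simpa using lintegral_prod_q hq hX

/-- From a configuration in `B`, the kernel only reaches configurations at distance less than `δ`;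
the distance on configurations is the maximum over the coordinates. -/
lemma le_gluedPlan_thickening [IsProbabilityMeasure μ] (hP : P ∈ Plans N μ)
    (hq : Measurable (Function.uncurry q)) (hq1 : ∀ᵐ x ∂μ, ∫⁻ x', q x x' ∂μ = 1)
    {δ : ℝ} (hδ : 0 < δ) (hsupp : ∀ x x', q x x' ≠ 0 → dist x x' < δ)
    {B : Set (Conf d N)} (hB : MeasurableSet B) :
    P B ≤ gluedPlan μ P q (Metric.thickening δ B) := by
  have := hP.1
  have hT : MeasurableSet (Metric.thickening δ B) := Metric.isOpen_thickening.measurableSet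
  have hpq : ∀ X : Conf d N, Measurable fun X' : Conf d N => ∏ i, q (X i) (X' i) :=
    fun X => (measurable_prod_q hq).comp measurable_prodMk_left
  rw [← lintegral_indicator_one hB, ← lintegral_indicator_one hT,
    lintegral_gluedPlan hq (measurable_one.indicator hT)]
  refine lintegral_mono_ae ?_
  filter_upwards [ae_marginal_one hP hq1] with X hX
  rw [← mul_one (B.indicator 1 X), ← lintegral_prod_q hq hX, ← lintegral_const_mul _ (hpq X)]
  refine lintegral_mono fun X' => ?_
  by_cases hXB : X ∈ B
  · by_cases h0 : ∏ i, q (X i) (X' i) = 0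
    · simp [h0]
    · have hdist : dist X' X < δ := (dist_pi_lt_iff hδ).2 fun i => by
        rw [dist_comm]
        exact hsupp _ _ fun h => h0 (Finset.prod_eq_zero (Finset.mem_univ i) h)
      have : X' ∈ Metric.thickening δ B := Metric.mem_thickening_iff.2 ⟨X, hXB, hdist⟩
      simp [hXB, this]
  · simp [hXB]

lemma levyProkhorovDist_gluedPlan_le [IsProbabilityMeasure μ] (hP : P ∈ Plans N μ)
    (hq : Measurable (Function.uncurry q)) (hsymm : ∀ x x', q x x' = q x' x)
    (hq1 : ∀ᵐ x ∂μ, ∫⁻ x', q x x' ∂μ = 1)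
    {δ : ℝ} (hδ : 0 < δ) (hsupp : ∀ x x', q x x' ≠ 0 → dist x x' < δ) :
    levyProkhorovDist (gluedPlan μ P q) P ≤ δ := by
  have := hP.1
  have := (gluedPlan_mem_plans hP hq hsymm hq1).1
  rw [levyProkhorovDist_comm]
  refine levyProkhorovDist_le_of_forall_le _ _ hδ.le fun ε B hε hB => ?_
  exact ((le_gluedPlan_thickening hP hq hq1 hδ hsupp hB).trans
    (measure_mono (Metric.thickening_mono hε.le B))).trans le_self_add

end Glue

/-! ### The mollifier and its overlap kernel -/

section Mollifier

variable {d N : ℕ} {k ε : ℝ} {ρ : Ed d → ℝ} {P : Measure (Conf d N)}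

lemma eta_nonneg (hk : 0 < k) (u : Ed d) : 0 ≤ eta d k u := by
  unfold eta; split_ifs <;> positivity

lemma eta_le (hk : 0 < k) (u : Ed d) : eta d k u ≤ k := by
  unfold eta
  split_ifs with h
  · have h1 : 0 < 1 - ‖u‖ ^ 2 := by nlinarith [norm_nonneg u]
    have : Real.exp (-1 / (1 - ‖u‖ ^ 2)) ≤ 1 :=
      Real.exp_le_one_iff.2 (div_nonpos_of_nonpos_of_nonneg (by norm_num) h1.le)
    nlinarith
  · exact hk.le

lemma measurable_eta : Measurable (eta d k) := by
  unfold eta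
  exact Measurable.ite (measurableSet_lt measurable_norm measurable_const) (by fun_prop)
    measurable_const

lemma etaScaled_nonneg (hk : 0 < k) (hε : 0 < ε) (u : Ed d) : 0 ≤ etaScaled d k ε u :=
  mul_nonneg (by positivity) (eta_nonneg hk _)

lemma etaScaled_le (hk : 0 < k) (hε : 0 < ε) (u : Ed d) :
    etaScaled d k ε u ≤ (ε ^ d)⁻¹ * k :=
  mul_le_mul_of_nonneg_left (eta_le hk _) (by positivity)

lemma measurable_etaScaled : Measurable (etaScaled d k ε) :=
  (measurable_eta.comp (measurable_const_smul _)).const_mul _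

lemma norm_lt_of_etaScaled_ne_zero (hε : 0 < ε) {u : Ed d} (h : etaScaled d k ε u ≠ 0) :
    ‖u‖ < ε := by
  by_contra hu
  refine h ?_
  have : ¬ ‖ε⁻¹ • u‖ < 1 := by
    rw [norm_smul, norm_inv, Real.norm_of_nonneg hε.le, inv_mul_lt_iff₀ hε, mul_one]
    exact hu
  simp [etaScaled, eta, this]

/-- The Bochner integral of `η_ε` is nonzero, so `η_ε` is integrable. -/
lemma lintegral_etaScaled (hk : 0 < k) (hnorm : ∫ u : Ed d, eta d k u = 1) (hε : 0 < ε) :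
    ∫⁻ u, ENNReal.ofReal (etaScaled d k ε u) = 1 := by
  have h1 : ∫ u, etaScaled d k ε u = 1 := by
    unfold etaScaled
    rw [integral_const_mul, Measure.integral_comp_inv_smul_of_nonneg _ _ hε.le, hnorm]
    simp [hε.ne']
  have hint : Integrable (etaScaled d k ε) := by
    by_contra h
    rw [integral_undef h] at h1
    exact zero_ne_one h1
  rw [← ofReal_integral_eq_lintegral_ofReal hint (ae_of_all _ (etaScaled_nonneg hk hε)), h1,
    ENNReal.ofReal_one]

/-- The measure `ρ dx`. -/
def densityMeasure (ρ : Ed d → ℝ) : Measure (Ed d) :=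
  volume.withDensity fun x => ENNReal.ofReal (ρ x)

/-- The kernel `q x x' = ∫ η_ε(y - x) η_ε(y - x') / ρ_ε(y) dy`. Where `ρ_ε(y) = 0` the factor
`ρ_ε(y)⁻¹` is `0`, by the convention for real inverses, in accordance with `γ_ε(x, y) = 0` there. -/
def overlap (k ε : ℝ) (ρ : Ed d → ℝ) (x x' : Ed d) : ENNReal :=
  ∫⁻ y, ENNReal.ofReal (etaScaled d k ε (y - x)) * ENNReal.ofReal (etaScaled d k ε (y - x'))
    * ENNReal.ofReal (rhoMol d k ε ρ y)⁻¹

lemma overlap_symm (x x' : Ed d) : overlap k ε ρ x x' = overlap k ε ρ x' x := by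
  unfold overlap
  simp_rw [mul_comm (ENNReal.ofReal (etaScaled d k ε (_ - x)))]

lemma dist_lt_of_overlap_ne_zero (hε : 0 < ε) {x x' : Ed d} (h : overlap k ε ρ x x' ≠ 0) :
    dist x x' < 2 * ε := by
  by_contra hd
  refine h ?_
  unfold overlap
  rw [lintegral_congr (g := fun _ => 0), lintegral_zero]
  intro y
  by_contra hy
  have h1 : etaScaled d k ε (y - x) ≠ 0 := fun h0 => hy (by simp [h0])
  have h2 : etaScaled d k ε (y - x') ≠ 0 := fun h0 => hy (by simp [h0])
  have h1 := norm_lt_of_etaScaled_ne_zero hε h1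
  have h2 := norm_lt_of_etaScaled_ne_zero hε h2
  rw [← dist_eq_norm] at h1 h2
  exact hd (by linarith [dist_triangle_left x x' y])

lemma measurable_rhoMol (hρ : Measurable ρ) : Measurable (rhoMol d k ε ρ) := by
  have : StronglyMeasurable fun p : Ed d × Ed d => ρ p.2 * etaScaled d k ε (p.1 - p.2) :=
    ((hρ.comp measurable_snd).mul
      (measurable_etaScaled.comp (measurable_fst.sub measurable_snd))).stronglyMeasurable
  exact this.integral_prod_right'.measurable

lemma measurable_ofReal_etaScaled_sub :
    Measurable fun p : Ed d × Ed d => ENNReal.ofReal (etaScaled d k ε (p.1 - p.2)) :=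
  (measurable_etaScaled.comp (measurable_fst.sub measurable_snd)).ennreal_ofReal

lemma measurable_ofReal_etaScaled_sub' :
    Measurable fun p : Ed d × Ed d => ENNReal.ofReal (etaScaled d k ε (p.2 - p.1)) :=
  (measurable_etaScaled.comp (measurable_snd.sub measurable_fst)).ennreal_ofReal

lemma measurable_overlap (hρ : Measurable ρ) :
    Measurable (Function.uncurry (overlap k ε ρ)) := by
  have h := measurable_ofReal_etaScaled_sub (d := d) (k := k) (ε := ε)
  have : Measurable fun p : (Ed d × Ed d) × Ed d =>
      ENNReal.ofReal (etaScaled d k ε (p.2 - p.1.1)) *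
        ENNReal.ofReal (etaScaled d k ε (p.2 - p.1.2)) * ENNReal.ofReal (rhoMol d k ε ρ p.2)⁻¹ :=
    ((h.comp (measurable_snd.prodMk (measurable_fst.comp measurable_fst))).mul
      (h.comp (measurable_snd.prodMk (measurable_snd.comp measurable_fst)))).mul
      (((measurable_rhoMol hρ).comp measurable_snd).inv.ennreal_ofReal)
  exact this.lintegral_prod_right'

lemma ofReal_rhoMol (hk : 0 < k) (hε : 0 < ε) (hρ : Measurable ρ) (h0 : ∀ x, 0 ≤ ρ x)
    [IsProbabilityMeasure (densityMeasure ρ)] (y : Ed d) :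
    ENNReal.ofReal (rhoMol d k ε ρ y)
      = ∫⁻ x, ENNReal.ofReal (etaScaled d k ε (y - x)) ∂densityMeasure ρ := by
  have hη : Measurable fun x => etaScaled d k ε (y - x) :=
    measurable_etaScaled.comp (measurable_const.sub measurable_id)
  have hρi : Integrable ρ := by
    refine ⟨hρ.aestronglyMeasurable, ?_⟩
    rw [hasFiniteIntegral_iff_ofReal (ae_of_all _ h0)]
    have := measure_lt_top (densityMeasure ρ) Set.univ
    rwa [densityMeasure, withDensity_apply _ MeasurableSet.univ, Measure.restrict_univ] at this
  have hi : Integrable fun x => ρ x * etaScaled d k ε (y - x) :=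
    hρi.mul_bdd (c := (ε ^ d)⁻¹ * k) hη.aestronglyMeasurable (ae_of_all _ fun x => by
      rw [Real.norm_of_nonneg (etaScaled_nonneg hk hε _)]; exact etaScaled_le hk hε _)
  rw [rhoMol, ofReal_integral_eq_lintegral_ofReal hi
    (ae_of_all _ fun x => mul_nonneg (h0 x) (etaScaled_nonneg hk hε _)), densityMeasure,
    lintegral_withDensity_eq_lintegral_mul _ hρ.ennreal_ofReal hη.ennreal_ofReal]
  refine lintegral_congr fun x => ?_
  rw [ENNReal.ofReal_mul (h0 x), Pi.mul_apply]

lemma rhoMol_nonneg (hk : 0 < k) (hε : 0 < ε) (h0 : ∀ x, 0 ≤ ρ x) (y : Ed d) :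
    0 ≤ rhoMol d k ε ρ y :=
  integral_nonneg fun x => mul_nonneg (h0 x) (etaScaled_nonneg hk hε _)

/-- For `μ`-a.e. `x`, the mollifier centred at `x` puts no mass on `{ρ_ε = 0}`: the `μ`-integral of
that mass is `∫_{ρ_ε = 0} ρ_ε`. -/
lemma ae_setLIntegral_rhoMol_zero (hk : 0 < k) (hε : 0 < ε) (hρ : Measurable ρ)
    (h0 : ∀ x, 0 ≤ ρ x) [IsProbabilityMeasure (densityMeasure ρ)] :
    ∀ᵐ x ∂densityMeasure ρ,
      ∫⁻ y in {y | rhoMol d k ε ρ y = 0}, ENNReal.ofReal (etaScaled d k ε (y - x)) = 0 := by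
  have h := measurable_ofReal_etaScaled_sub (d := d) (k := k) (ε := ε)
  have hS : MeasurableSet {y | rhoMol d k ε ρ y = 0} :=
    measurable_rhoMol hρ (measurableSet_singleton 0)
  have hm : Measurable fun x => ∫⁻ y in {y | rhoMol d k ε ρ y = 0},
      ENNReal.ofReal (etaScaled d k ε (y - x)) := h.lintegral_prod_left'
  refine (lintegral_eq_zero_iff hm).1 ?_
  have hsw : Measurable (Function.uncurry fun x y : Ed d =>
      ENNReal.ofReal (etaScaled d k ε (y - x))) := measurable_ofReal_etaScaled_sub'
  rw [lintegral_lintegral_swap hsw.aemeasurable,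
    setLIntegral_congr_fun (g := fun _ => 0) hS, lintegral_zero]
  intro y hy
  simp only
  rw [← ofReal_rhoMol hk hε hρ h0, hy.out, ENNReal.ofReal_zero]

lemma ae_lintegral_overlap (hk : 0 < k) (hnorm : ∫ u : Ed d, eta d k u = 1) (hε : 0 < ε)
    (hρ : Measurable ρ) (h0 : ∀ x, 0 ≤ ρ x) [IsProbabilityMeasure (densityMeasure ρ)] :
    ∀ᵐ x ∂densityMeasure ρ, ∫⁻ x', overlap k ε ρ x x' ∂densityMeasure ρ = 1 := by
  have hS : MeasurableSet {y | rhoMol d k ε ρ y = 0} :=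
    measurable_rhoMol hρ (measurableSet_singleton 0)
  have hr := measurable_rhoMol (k := k) (ε := ε) hρ
  filter_upwards [ae_setLIntegral_rhoMol_zero hk hε hρ h0] with x hx
  have hηx : Measurable fun y => ENNReal.ofReal (etaScaled d k ε (y - x)) :=
    (measurable_etaScaled.comp (measurable_id.sub measurable_const)).ennreal_ofReal
  have hy : ∀ y, Measurable fun x' => ENNReal.ofReal (etaScaled d k ε (y - x')) :=
    fun y => (measurable_etaScaled.comp (measurable_const.sub measurable_id)).ennreal_ofReal
  have hF : Measurable (Function.uncurry fun x' y : Ed d =>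
      ENNReal.ofReal (etaScaled d k ε (y - x)) * ENNReal.ofReal (etaScaled d k ε (y - x')) *
        ENNReal.ofReal (rhoMol d k ε ρ y)⁻¹) :=
    ((hηx.comp measurable_snd).mul measurable_ofReal_etaScaled_sub').mul
      (hr.comp measurable_snd).inv.ennreal_ofReal
  unfold overlap
  rw [lintegral_lintegral_swap hF.aemeasurable]
  · have e : ∀ y, ∫⁻ x', ENNReal.ofReal (etaScaled d k ε (y - x)) *
        ENNReal.ofReal (etaScaled d k ε (y - x')) * ENNReal.ofReal (rhoMol d k ε ρ y)⁻¹
          ∂densityMeasure ρ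
        = {y | rhoMol d k ε ρ y = 0}ᶜ.indicator
            (fun y => ENNReal.ofReal (etaScaled d k ε (y - x))) y := by
      intro y
      rw [lintegral_mul_const _ ((hy y).const_mul _), lintegral_const_mul _ (hy y),
        ← ofReal_rhoMol hk hε hρ h0, mul_assoc, ← ENNReal.ofReal_mul (rhoMol_nonneg hk hε h0 y)]
      by_cases hz : rhoMol d k ε ρ y = 0
      · simp [hz]
      · simp [hz]
    simp_rw [e]
    -- By `hx` the integral over `{ρ_ε = 0}` may be added back at no cost.
    rw [lintegral_indicator hS.compl, ← zero_add (∫⁻ y in _, _), ← hx,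
      lintegral_add_compl _ hS,
      lintegral_sub_right_eq_self (fun u => ENNReal.ofReal (etaScaled d k ε u)) x]
    exact lintegral_etaScaled hk hnorm hε

/-! ### Reconstructed plans as glued plans -/

lemma ofReal_gammaMol (hk : 0 < k) (hε : 0 < ε) (h0 : ∀ x, 0 ≤ ρ x) (x y : Ed d) :
    ENNReal.ofReal (gammaMol d k ε ρ x y) = ENNReal.ofReal (ρ x) *
      (ENNReal.ofReal (etaScaled d k ε (y - x)) * ENNReal.ofReal (rhoMol d k ε ρ y)⁻¹) := by
  rw [← ENNReal.ofReal_mul (etaScaled_nonneg hk hε _), ← ENNReal.ofReal_mul (h0 x)]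
  unfold gammaMol
  split_ifs with h
  · simp [h]
  · rw [div_eq_mul_inv, mul_assoc]

lemma gammaMol_nonneg (hk : 0 < k) (hε : 0 < ε) (h0 : ∀ x, 0 ≤ ρ x) (x y : Ed d) :
    0 ≤ gammaMol d k ε ρ x y := by
  unfold gammaMol
  split_ifs
  · exact le_rfl
  · exact div_nonneg (mul_nonneg (h0 x) (etaScaled_nonneg hk hε _)) (rhoMol_nonneg hk hε h0 y)

lemma measurable_gammaMol (hρ : Measurable ρ) :
    Measurable fun p : Ed d × Ed d => gammaMol d k ε ρ p.1 p.2 := by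
  have hr : Measurable fun p : Ed d × Ed d => rhoMol d k ε ρ p.2 :=
    (measurable_rhoMol hρ).comp measurable_snd
  unfold gammaMol
  exact Measurable.ite (hr (measurableSet_singleton 0)) measurable_const
    (((hρ.comp measurable_fst).mul
      (measurable_etaScaled.comp (measurable_snd.sub measurable_fst))).div hr)

lemma Hmol_nonneg (hk : 0 < k) (hε : 0 < ε) (Z : Conf d N) : 0 ≤ Hmol d N k ε Z :=
  Finset.prod_nonneg fun _ _ => etaScaled_nonneg hk hε _

lemma measurable_Hmol : Measurable (Hmol d N k ε) :=
  Finset.measurable_prod _ fun i _ => measurable_etaScaled.comp (measurable_pi_apply i)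

lemma measurable_mollifiedPlan [IsProbabilityMeasure P] : Measurable (mollifiedPlan d N k ε P) := by
  have : StronglyMeasurable fun p : Conf d N × Conf d N => Hmol d N k ε (p.1 - p.2) :=
    (measurable_Hmol.comp (measurable_fst.sub measurable_snd)).stronglyMeasurable
  exact this.integral_prod_right'.measurable

lemma mollifiedPlan_nonneg (hk : 0 < k) (hε : 0 < ε) (Y : Conf d N) :
    0 ≤ mollifiedPlan d N k ε P Y :=
  integral_nonneg fun _ => Hmol_nonneg hk hε _

lemma ofReal_mollifiedPlan [IsProbabilityMeasure P] (hk : 0 < k) (hε : 0 < ε) (Y : Conf d N) :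
    ENNReal.ofReal (mollifiedPlan d N k ε P Y)
      = ∫⁻ X, ∏ i, ENNReal.ofReal (etaScaled d k ε (Y i - X i)) ∂P := by
  have hi : Integrable (fun X => Hmol d N k ε (Y - X)) P := by
    refine Integrable.of_bound
      (measurable_Hmol.comp (measurable_const.sub measurable_id)).aestronglyMeasurable
      (∏ _i : Fin N, (ε ^ d)⁻¹ * k) (ae_of_all _ fun X => ?_)
    rw [Real.norm_of_nonneg (Hmol_nonneg hk hε _)]
    exact Finset.prod_le_prod (fun _ _ => etaScaled_nonneg hk hε _)
      fun _ _ => etaScaled_le hk hε _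
  rw [mollifiedPlan, ofReal_integral_eq_lintegral_ofReal hi
    (ae_of_all _ fun X => Hmol_nonneg hk hε _)]
  refine lintegral_congr fun X => ?_
  rw [Hmol, ENNReal.ofReal_prod_of_nonneg fun _ _ => etaScaled_nonneg hk hε _]
  rfl

lemma measurable_reconstruct_integrand [IsProbabilityMeasure P] (hρ : Measurable ρ) :
    Measurable fun p : Conf d N × Conf d N =>
      mollifiedPlan d N k ε P p.2 * ∏ i, gammaMol d k ε ρ (p.1 i) (p.2 i) :=
  (measurable_mollifiedPlan.comp measurable_snd).mul <|
    Finset.measurable_prod _ fun i _ => (measurable_gammaMol hρ).comp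
      (f := fun p : Conf d N × Conf d N => (p.1 i, p.2 i))
      (((measurable_pi_apply i).comp measurable_fst).prodMk
        ((measurable_pi_apply i).comp measurable_snd))

lemma measurable_reconstructedPlan [IsProbabilityMeasure P] (hρ : Measurable ρ) :
    Measurable (reconstructedPlan d N k ε ρ P) :=
  (measurable_reconstruct_integrand hρ).stronglyMeasurable.integral_prod_right'.measurable

lemma reconstruct_integrand_nonneg (hk : 0 < k) (hε : 0 < ε) (h0 : ∀ x, 0 ≤ ρ x)
    (X Y : Conf d N) :
    0 ≤ mollifiedPlan d N k ε P Y * ∏ i, gammaMol d k ε ρ (X i) (Y i) :=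
  mul_nonneg (mollifiedPlan_nonneg hk hε Y)
    (Finset.prod_nonneg fun _ _ => gammaMol_nonneg hk hε h0 _ _)

/-- Tonelli's theorem, first in `(X, Y)` and then over the coordinates of `Y`, turns the integral
defining `P_ε(X')` into the density of the glued plan. -/
lemma lintegral_reconstruct_integrand [IsProbabilityMeasure P] (hk : 0 < k) (hε : 0 < ε)
    (hρ : Measurable ρ) (h0 : ∀ x, 0 ≤ ρ x) (X' : Conf d N) :
    ∫⁻ Y, ENNReal.ofReal (mollifiedPlan d N k ε P Y * ∏ i, gammaMol d k ε ρ (X' i) (Y i))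
      = (∏ i, ENNReal.ofReal (ρ (X' i))) * gluedDensity P (overlap k ε ρ) X' := by
  have h := measurable_ofReal_etaScaled_sub (d := d) (k := k) (ε := ε)
  have hw : Measurable fun y => ENNReal.ofReal (rhoMol d k ε ρ y)⁻¹ :=
    (measurable_rhoMol hρ).inv.ennreal_ofReal
  have hF : Measurable fun p : Conf d N × Conf d N =>
      ∏ i, (ENNReal.ofReal (etaScaled d k ε (p.1 i - p.2 i)) *
        ENNReal.ofReal (etaScaled d k ε (p.1 i - X' i)) *
        ENNReal.ofReal (rhoMol d k ε ρ (p.1 i))⁻¹) := by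
    refine Finset.measurable_prod _ fun i _ => ?_
    have h1 : Measurable fun p : Conf d N × Conf d N => p.1 i :=
      (measurable_pi_apply i).comp measurable_fst
    have h2 : Measurable fun p : Conf d N × Conf d N => p.2 i :=
      (measurable_pi_apply i).comp measurable_snd
    exact ((h.comp (h1.prodMk h2)).mul (h.comp (h1.prodMk measurable_const))).mul (hw.comp h1)
  have e : ∀ Y : Conf d N,
      ENNReal.ofReal (mollifiedPlan d N k ε P Y * ∏ i, gammaMol d k ε ρ (X' i) (Y i))
      = (∏ i, ENNReal.ofReal (ρ (X' i))) *
        ∫⁻ X, ∏ i, (ENNReal.ofReal (etaScaled d k ε (Y i - X i)) *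
          ENNReal.ofReal (etaScaled d k ε (Y i - X' i)) *
          ENNReal.ofReal (rhoMol d k ε ρ (Y i))⁻¹) ∂P := by
    intro Y
    have hm : Measurable fun X : Conf d N => ∏ i, ENNReal.ofReal (etaScaled d k ε (Y i - X i)) :=
      Finset.measurable_prod _ fun i _ => h.comp
        (f := fun X : Conf d N => (Y i, X i)) (measurable_const.prodMk (measurable_pi_apply i))
    rw [ENNReal.ofReal_mul (mollifiedPlan_nonneg hk hε Y), ofReal_mollifiedPlan hk hε,
      ENNReal.ofReal_prod_of_nonneg fun _ _ => gammaMol_nonneg hk hε h0 _ _]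
    simp_rw [ofReal_gammaMol hk hε h0, mul_assoc]
    rw [Finset.prod_mul_distrib, mul_left_comm, ← lintegral_mul_const _ hm]
    simp_rw [← Finset.prod_mul_distrib]
  simp_rw [e]
  have hin : Measurable fun Y : Conf d N => ∫⁻ X, ∏ i,
      (ENNReal.ofReal (etaScaled d k ε (Y i - X i)) *
          ENNReal.ofReal (etaScaled d k ε (Y i - X' i)) *
          ENNReal.ofReal (rhoMol d k ε ρ (Y i))⁻¹) ∂P := hF.lintegral_prod_right'
  rw [lintegral_const_mul _ hin, lintegral_lintegral_swap hF.aemeasurable, gluedDensity]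
  congr 1
  refine lintegral_congr fun X => ?_
  rw [volume_pi, lintegral_pi_prod volume (fun i y => ENNReal.ofReal (etaScaled d k ε (y - X i)) *
          ENNReal.ofReal (etaScaled d k ε (y - X' i)) *
          ENNReal.ofReal (rhoMol d k ε ρ y)⁻¹)]
  · rfl
  · exact fun i => ((h.comp measurable_prodMk_right).mul (h.comp measurable_prodMk_right)).mul hw

lemma gluedPlan_eq_withDensity [IsProbabilityMeasure P] [IsProbabilityMeasure (densityMeasure ρ)]
    (hρ : Measurable ρ) :
    gluedPlan (densityMeasure ρ) P (overlap k ε ρ) = volume.withDensity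
      fun X' => (∏ i, ENNReal.ofReal (ρ (X' i))) * gluedDensity P (overlap k ε ρ) X' := by
  have : SigmaFinite ((volume : Measure (Ed d)).withDensity fun x => ENNReal.ofReal (ρ x)) :=
    inferInstanceAs (SigmaFinite (densityMeasure ρ))
  have hm : Measurable fun X' : Conf d N => ∏ i, ENNReal.ofReal (ρ (X' i)) :=
    Finset.measurable_prod _ fun i _ => (hρ.comp (measurable_pi_apply i)).ennreal_ofReal
  rw [gluedPlan, densityMeasure, ← pi_withDensity d N _ hρ.ennreal_ofReal]
  exact (withDensity_mul _ hm (measurable_gluedDensity (measurable_overlap hρ))).symm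

/-- The two densities agree wherever the integral defining `P_ε(X)` is finite, which is almost
everywhere because the glued plan has total mass `1`. -/
lemma withDensity_reconstructedPlan [IsProbabilityMeasure (densityMeasure ρ)]
    (hk : 0 < k) (hnorm : ∫ u : Ed d, eta d k u = 1) (hε : 0 < ε)
    (hρ : Measurable ρ) (h0 : ∀ x, 0 ≤ ρ x) (hP : P ∈ Plans N (densityMeasure ρ)) :
    (volume.withDensity fun X => ENNReal.ofReal (reconstructedPlan d N k ε ρ P X))
      = gluedPlan (densityMeasure ρ) P (overlap k ε ρ) := by
  have := hP.1
  have hg := (gluedPlan_mem_plans hP (measurable_overlap (k := k) (ε := ε) hρ) overlap_symm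
    (ae_lintegral_overlap hk hnorm hε hρ h0)).1
  have hgm : Measurable fun X' : Conf d N =>
      (∏ i, ENNReal.ofReal (ρ (X' i))) * gluedDensity P (overlap k ε ρ) X' :=
    (Finset.measurable_prod _ fun i _ => (hρ.comp (measurable_pi_apply i)).ennreal_ofReal).mul
      (measurable_gluedDensity (measurable_overlap hρ))
  rw [gluedPlan_eq_withDensity hρ] at hg ⊢
  have hfin : ∫⁻ X' : Conf d N,
      (∏ i, ENNReal.ofReal (ρ (X' i))) * gluedDensity P (overlap k ε ρ) X' ≠ ⊤ := by
    rw [← setLIntegral_univ, ← withDensity_apply _ MeasurableSet.univ]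
    exact measure_ne_top _ _
  refine withDensity_congr_ae ?_
  filter_upwards [ae_lt_top hgm hfin] with X' hX'
  rw [← lintegral_reconstruct_integrand hk hε hρ h0] at hX' ⊢
  have hnn := ae_of_all (volume : Measure (Conf d N))
    (reconstruct_integrand_nonneg (P := P) hk hε h0 X')
  refine ofReal_integral_eq_lintegral_ofReal ⟨?_, ?_⟩ hnn
  · exact ((measurable_reconstruct_integrand hρ).comp measurable_prodMk_left).aestronglyMeasurable
  · rwa [hasFiniteIntegral_iff_ofReal hnn]

lemma integral_mul_reconstructedPlan [IsProbabilityMeasure P] (hk : 0 < k) (hε : 0 < ε)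
    (hρ : Measurable ρ) (h0 : ∀ x, 0 ≤ ρ x) (f : Conf d N → ℝ) :
    ∫ X, f X * reconstructedPlan d N k ε ρ P X = ∫ X, f X
      ∂(volume.withDensity fun X => ENNReal.ofReal (reconstructedPlan d N k ε ρ P X)) := by
  rw [integral_withDensity_eq_integral_toReal_smul
    (measurable_reconstructedPlan hρ).ennreal_ofReal (ae_of_all _ fun _ => ENNReal.ofReal_lt_top)]
  refine integral_congr_ae (ae_of_all _ fun X => ?_)
  have : 0 ≤ reconstructedPlan d N k ε ρ P X :=
    integral_nonneg (reconstruct_integrand_nonneg hk hε h0 X)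
  simp only [ENNReal.toReal_ofReal this, smul_eq_mul, mul_comm]

end Mollifier

/-! ### Narrow convergence -/

/-- Lévy-Prokhorov convergence implies narrow convergence, for families of measures that are
probability measures for positive parameters only. -/
lemma tendsto_integral_of_levyProkhorovDist {Ω : Type*} [MeasurableSpace Ω] [PseudoMetricSpace Ω]
    [OpensMeasurableSpace Ω] {Q : ℝ → Measure Ω} {P : Measure Ω} [IsProbabilityMeasure P]
    (hQ : ∀ ε, 0 < ε → IsProbabilityMeasure (Q ε))
    (hd : ∀ ε, 0 < ε → levyProkhorovDist (Q ε) P ≤ 2 * ε) (f : BoundedContinuousFunction Ω ℝ) :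
    Tendsto (fun ε => ∫ x, f x ∂Q ε) (𝓝[>] 0) (𝓝 (∫ x, f x ∂P)) := by
  classical
  let p : ProbabilityMeasure Ω := ⟨P, inferInstance⟩
  let μs : ℝ → ProbabilityMeasure Ω := fun ε => if h : 0 < ε then ⟨Q ε, hQ ε h⟩ else p
  have hμs : ∀ ε, 0 < ε → (μs ε : Measure Ω) = Q ε := fun ε h => by simp [μs, h]
  have hlim : Tendsto (fun ε => LevyProkhorov.ofMeasure (μs ε)) (𝓝[>] 0)
      (𝓝 (LevyProkhorov.ofMeasure p)) := by
    rw [tendsto_iff_dist_tendsto_zero]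
    have h2 : Tendsto (fun ε : ℝ => 2 * ε) (𝓝[>] 0) (𝓝 0) := by
      have : Tendsto (fun ε : ℝ => 2 * ε) (𝓝 0) (𝓝 (2 * 0)) := tendsto_id.const_mul 2
      rw [mul_zero] at this
      exact this.mono_left nhdsWithin_le_nhds
    refine squeeze_zero' (Eventually.of_forall fun _ => dist_nonneg) ?_ h2
    filter_upwards [self_mem_nhdsWithin] with ε hε
    rw [LevyProkhorov.dist_probabilityMeasure_def]
    simp only [hμs ε hε]
    exact hd ε hε
  have hweak : Tendsto μs (𝓝[>] 0) (𝓝 p) :=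
    (LevyProkhorov.continuous_toMeasure_probabilityMeasure.tendsto _).comp hlim
  refine (ProbabilityMeasure.tendsto_iff_forall_integral_tendsto.1 hweak f).congr' ?_
  filter_upwards [self_mem_nhdsWithin] with ε hε
  rw [hμs ε hε]

/-- **The reconstructed plan has marginals `ρ` and converges narrowly to `P`.**
Each `P_ε dX` is a probability measure in `Π(ρ)`, and `P_ε ⇀ P` as `ε → 0⁺`. -/
theorem reconstructedPlan_marginals_and_narrow_convergence (d N : ℕ) (hN : 1 ≤ N)
    (k : ℝ) (hk : 0 < k) (hnorm : ∫ u : Ed d, eta d k u = 1)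
    (ρ : Ed d → ℝ) (hmeas : Measurable ρ) (h0 : ∀ x, 0 ≤ ρ x)
    (hprob : IsProbabilityMeasure (volume.withDensity fun x => ENNReal.ofReal (ρ x)))
    (P : Measure (Conf d N))
    (hP : P ∈ Plans N (volume.withDensity fun x => ENNReal.ofReal (ρ x))) :
    (∀ ε : ℝ, 0 < ε →
      (volume.withDensity fun X => ENNReal.ofReal (reconstructedPlan d N k ε ρ P X))
        ∈ Plans N (volume.withDensity fun x => ENNReal.ofReal (ρ x))) ∧
    (∀ f : BoundedContinuousFunction (Conf d N) ℝ,
      Tendsto (fun ε => ∫ X, f X * reconstructedPlan d N k ε ρ P X) (𝓝[>] (0 : ℝ))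
        (𝓝 (∫ X, f X ∂P))) := by
  have hμ : IsProbabilityMeasure (densityMeasure ρ) := hprob
  have hP' : P ∈ Plans N (densityMeasure ρ) := hP
  have hPprob := hP.1
  have hmem : ∀ ε : ℝ, 0 < ε →
      (volume.withDensity fun X => ENNReal.ofReal (reconstructedPlan d N k ε ρ P X))
        ∈ Plans N (densityMeasure ρ) := by
    intro ε hε
    rw [withDensity_reconstructedPlan hk hnorm hε hmeas h0 hP']
    exact gluedPlan_mem_plans hP' (measurable_overlap hmeas) overlap_symm
      (ae_lintegral_overlap hk hnorm hε hmeas h0)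
  refine ⟨hmem, fun f => ?_⟩
  have hlim := tendsto_integral_of_levyProkhorovDist
    (Q := fun ε => volume.withDensity fun X => ENNReal.ofReal (reconstructedPlan d N k ε ρ P X))
    (P := P) (fun ε hε => (hmem ε hε).1) (fun ε hε => by
      rw [withDensity_reconstructedPlan hk hnorm hε hmeas h0 hP']
      exact levyProkhorovDist_gluedPlan_le hP' (measurable_overlap hmeas) overlap_symm
        (ae_lintegral_overlap hk hnorm hε hmeas h0) (by positivity)
        fun _ _ => dist_lt_of_overlap_ne_zero hε) f
  refine hlim.congr' ?_
  filter_upwards [self_mem_nhdsWithin] with ε hε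
  exact (integral_mul_reconstructedPlan hk hε hmeas h0 f).symm
end
end
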